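/- arXiv:1902.09128 — 4 statements merged into one kernel-verified Lean document; each statement's English description precedes it below -/
import Mathlib

section
/- Let v, ξ̂ ∈ ℝⁿ, t ∈ ℝ and λ ∈ ℝ. Then the extended-real supremum over ξ ∈ ℝⁿ of ⟨ξ,v⟩ − t − λ‖ξ − ξ̂‖_p equals ⟨ξ̂,v⟩ − t if ‖v‖_q ≤ λ, and equals +∞ if ‖v‖_q > λ. -/
open MeasureTheory Filter Topology
open scoped ENNReal BigOperators

/-- The ℓp norm on ℝⁿ, for `p ∈ [1,∞]` (an extended nonnegative real). -/
noncomputable def lpNorm {n : ℕ} (p : ℝ≥0∞) (x : Fin n → ℝ) : ℝ :=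
  if p = ∞ then ⨆ i, |x i| else (∑ i, |x i| ^ p.toReal) ^ (1 / p.toReal)

/-- The Euclidean inner product on ℝⁿ. -/
def ip {n : ℕ} (w x : Fin n → ℝ) : ℝ := ∑ i, w i * x i


lemma aux_conj {p q : ℝ≥0∞} (hp : 1 ≤ p) (hpq : 1 / p + 1 / q = 1) :
    (p = ∞ ∧ q = 1) ∨ (p = 1 ∧ q = ∞) ∨
      (p ≠ ∞ ∧ q ≠ ∞ ∧ Real.HolderConjugate p.toReal q.toReal) := by
  simp only [one_div] at hpq
  rcases eq_or_ne p ∞ with rfl | hp'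
  · left; simpa using hpq
  rcases eq_or_ne q ∞ with rfl | hq'
  · right; left; simpa using hpq
  right; right
  refine ⟨hp', hq', ?_⟩
  have h : ENNReal.HolderConjugate p q := ⟨by simpa using hpq⟩
  have hp0 : p ≠ 0 := by rintro rfl; simp at hp
  have hq0 : q ≠ 0 := by rintro rfl; simp at hpq
  rw [Real.holderConjugate_iff]
  have hsum : p.toReal⁻¹ + q.toReal⁻¹ = 1 := by
    rw [← ENNReal.toReal_inv, ← ENNReal.toReal_inv, ← ENNReal.toReal_add (by simp [hp0])
      (by simp [hq0]), hpq]; simp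
  refine ⟨?_, hsum⟩
  have h1 : 0 < q.toReal := ENNReal.toReal_pos hq0 hq'
  have h2 : 0 < p.toReal := ENNReal.toReal_pos hp0 hp'
  have h3 : 0 < q.toReal⁻¹ := by positivity
  have h4 : p.toReal⁻¹ < 1 := by linarith
  exact (inv_lt_one₀ h2).1 h4

lemma aux_one {n : ℕ} (x : Fin n → ℝ) : _root_.lpNorm 1 x = ∑ i, |x i| := by
  simp [_root_.lpNorm]

lemma aux_le_sup {n : ℕ} (x : Fin n → ℝ) (i : Fin n) : |x i| ≤ _root_.lpNorm ∞ x := by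
  simp only [_root_.lpNorm, if_true]
  exact le_ciSup (f := fun i => |x i|) (Set.finite_range _).bddAbove i

lemma aux_nonneg {n : ℕ} (p : ℝ≥0∞) (x : Fin n → ℝ) : 0 ≤ _root_.lpNorm p x := by
  unfold _root_.lpNorm
  split_ifs
  · exact Real.iSup_nonneg fun i => abs_nonneg _
  · positivity

lemma aux_smul {n : ℕ} {p : ℝ≥0∞} (hp : 1 ≤ p) (x : Fin n → ℝ) {s : ℝ} (hs : 0 ≤ s) :
    _root_.lpNorm p (s • x) = s * _root_.lpNorm p x := by
  unfold _root_.lpNorm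
  split_ifs with h
  · simp only [Pi.smul_apply, smul_eq_mul, abs_mul, abs_of_nonneg hs]
    rw [Real.mul_iSup_of_nonneg hs]
  · have h2 : 0 < p.toReal := ENNReal.toReal_pos (by rintro rfl; simp at hp) h
    simp only [Pi.smul_apply, smul_eq_mul, abs_mul, abs_of_nonneg hs]
    simp_rw [Real.mul_rpow hs (abs_nonneg _)]
    rw [← Finset.mul_sum, Real.mul_rpow (by positivity) (by positivity), ← Real.rpow_mul hs,
      mul_one_div_cancel h2.ne', Real.rpow_one]

lemma aux_holder {n : ℕ} {p q : ℝ≥0∞} (hp : 1 ≤ p) (hpq : 1 / p + 1 / q = 1)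
    (x y : Fin n → ℝ) : ip x y ≤ _root_.lpNorm q y * _root_.lpNorm p x := by
  have hab : ip x y ≤ ∑ i, |x i| * |y i| :=
    Finset.sum_le_sum fun i _ => by rw [← abs_mul]; exact le_abs_self _
  rcases aux_conj hp hpq with ⟨rfl, rfl⟩ | ⟨rfl, rfl⟩ | ⟨h1, h2, h⟩
  · rw [aux_one, Finset.sum_mul]
    refine hab.trans (Finset.sum_le_sum fun i _ => ?_)
    rw [mul_comm]
    exact mul_le_mul_of_nonneg_left (aux_le_sup x i) (abs_nonneg _)
  · rw [aux_one, Finset.mul_sum]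
    refine hab.trans (Finset.sum_le_sum fun i _ => ?_)
    rw [mul_comm]
    exact mul_le_mul_of_nonneg_right (aux_le_sup y i) (abs_nonneg _)
  · rw [mul_comm]
    simp only [_root_.lpNorm, h1, h2, if_false]
    exact Real.inner_le_Lp_mul_Lq _ _ _ h

/-- the signs -/
noncomputable def aux_sg (r : ℝ) : ℝ := if r < 0 then -1 else 1

lemma aux_sg_abs (r : ℝ) : |aux_sg r| = 1 := by
  unfold aux_sg; split_ifs <;> simp

lemma aux_sg_mul (r : ℝ) : aux_sg r * r = |r| := by
  unfold aux_sg; split_ifs with h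
  · rw [abs_of_neg h]; ring
  · rw [abs_of_nonneg (not_lt.1 h)]; ring

lemma aux_dual {n : ℕ} (hn : 1 ≤ n) {p q : ℝ≥0∞} (hp : 1 ≤ p) (hpq : 1 / p + 1 / q = 1)
    (v : Fin n → ℝ) : ∃ u : Fin n → ℝ, _root_.lpNorm p u ≤ 1 ∧ ip u v = _root_.lpNorm q v := by
  have : Nonempty (Fin n) := ⟨⟨0, hn⟩⟩
  rcases aux_conj hp hpq with ⟨rfl, rfl⟩ | ⟨rfl, rfl⟩ | ⟨h1, h2, h⟩
  · refine ⟨fun i => aux_sg (v i), ?_, ?_⟩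
    · simp [_root_.lpNorm, aux_sg_abs]
    · simp [aux_one, ip, aux_sg_mul]
  · obtain ⟨i, hi⟩ := exists_eq_ciSup_of_finite (f := fun i => |v i|)
    refine ⟨Pi.single i (aux_sg (v i)), ?_, ?_⟩
    · rw [aux_one, Finset.sum_eq_single i]
      · simp [aux_sg_abs]
      · intro j _ hj; simp [hj]
      · simp
    · simp only [_root_.lpNorm, if_true, ← hi, ip]
      rw [Finset.sum_eq_single i]
      · simp [aux_sg_mul]
      · intro j _ hj; simp [hj]
      · simp
  · obtain ⟨g, hg, hg2⟩ := (NNReal.isGreatest_Lp Finset.univ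
      (fun i => ‖v i‖₊) h.symm).1
    refine ⟨fun i => aux_sg (v i) * g i, ?_, ?_⟩
    · simp only [_root_.lpNorm, h1, if_false, abs_mul, aux_sg_abs, one_mul, NNReal.abs_eq]
      refine Real.rpow_le_one (by positivity) ?_ (by positivity)
      exact_mod_cast hg
    · simp only [_root_.lpNorm, h2, if_false, ip]
      have := congrArg (fun x : NNReal => (x : ℝ)) hg2
      simp only [NNReal.coe_sum, NNReal.coe_mul, NNReal.coe_rpow, coe_nnnorm, Real.norm_eq_abs] at this
      rw [← this]
      refine Finset.sum_congr rfl fun i _ => ?_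
      rw [← aux_sg_mul]; ring

lemma aux_dir {n : ℕ} (hn : 1 ≤ n) {p q : ℝ≥0∞} (hp : 1 ≤ p) (hpq : 1 / p + 1 / q = 1)
    (v : Fin n → ℝ) {lam : ℝ} (hl : lam < _root_.lpNorm q v) :
    ∃ u : Fin n → ℝ, 0 < ip u v - lam * _root_.lpNorm p u := by
  have : Nonempty (Fin n) := ⟨⟨0, hn⟩⟩
  rcases le_or_gt 0 lam with h | h
  · obtain ⟨u, h1, h2⟩ := aux_dual hn hp hpq v
    refine ⟨u, ?_⟩
    rw [h2]
    nlinarith [mul_le_mul_of_nonneg_left h1 h]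
  · refine ⟨fun i => aux_sg (v i), ?_⟩
    have h1 : 0 ≤ ip (fun i => aux_sg (v i)) v := by
      simp only [ip, aux_sg_mul]; positivity
    have h2 : 0 < _root_.lpNorm p (fun i => aux_sg (v i)) := by
      have : (0 : ℝ) < n := by exact_mod_cast hn
      unfold _root_.lpNorm
      split_ifs
      · simp [aux_sg_abs]
      · simp only [aux_sg_abs, Real.one_rpow, Finset.sum_const, Finset.card_univ,
          Fintype.card_fin, nsmul_eq_mul, mul_one]
        positivity
    nlinarith [mul_pos (neg_pos.2 h) h2]

open scoped Classical in
/-- `sup_{ξ∈ℝⁿ} (⟨ξ,v⟩ − t − λ‖ξ − ξ̂‖_p)` equals `⟨ξ̂,v⟩ − t` if `‖v‖_q ≤ λ`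
and `+∞` otherwise. -/
theorem stmt3 (n : ℕ) (hn : 1 ≤ n) (p q : ℝ≥0∞) (hp : 1 ≤ p) (hpq : 1 / p + 1 / q = 1)
    (v ξhat : Fin n → ℝ) (t lam : ℝ) :
    (⨆ ξ : Fin n → ℝ, ((ip ξ v - t - lam * lpNorm p (ξ - ξhat) : ℝ) : EReal)) =
      if lpNorm q v ≤ lam then ((ip ξhat v - t : ℝ) : EReal) else ⊤ := by
  have hadd : ∀ (u : Fin n → ℝ) (s : ℝ), ip (ξhat + s • u) v = ip ξhat v + s * ip u v := by
    intro u s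
    simp only [ip, Pi.add_apply, Pi.smul_apply, smul_eq_mul, add_mul, Finset.sum_add_distrib,
      Finset.mul_sum, mul_assoc]
  split_ifs with h
  · apply le_antisymm
    · refine iSup_le fun ξ => EReal.coe_le_coe_iff.2 ?_
      have h1 := aux_holder hp hpq (ξ - ξhat) v
      have h2 := hadd (ξ - ξhat) 1
      rw [one_smul, add_sub_cancel, one_mul] at h2
      have h3 := mul_le_mul_of_nonneg_right h (aux_nonneg p (ξ - ξhat))
      linarith
    · refine le_iSup_of_le ξhat (EReal.coe_le_coe_iff.2 ?_)
      have := aux_smul hp (0 : Fin n → ℝ) (le_refl (0 : ℝ))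
      rw [zero_smul, zero_mul] at this
      rw [sub_self, this]; linarith
  · obtain ⟨u, hu⟩ := aux_dir hn hp hpq v (not_le.1 h)
    rw [EReal.eq_top_iff_forall_lt]
    intro y
    set d := ip u v - lam * lpNorm p u with hd
    set s := (|y - (ip ξhat v - t)| + 1) / d with hsd
    have hs : 0 ≤ s := by positivity
    refine lt_of_lt_of_le ?_ (le_iSup _ (ξhat + s • u))
    refine EReal.coe_lt_coe_iff.2 ?_
    rw [hadd, add_sub_cancel_left, aux_smul hp u hs]
    have h1 : s * d = |y - (ip ξhat v - t)| + 1 := div_mul_cancel₀ _ hu.ne'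
    have h2 := le_abs_self (y - (ip ξhat v - t))
    have h3 : s * d = s * ip u v - lam * (s * lpNorm p u) := by rw [hd]; ring
    linarith
end

section
/- Let v ∈ ℝⁿ, t ∈ ℝ, ε ≥ 0 and let ξ̂¹,…,ξ̂ᴺ ∈ ℝⁿ (N ≥ 1) with empirical distribution F_N. Let μ be a Borel probability measure on ℝⁿ with finite first moment, and suppose there exists a coupling K of F_N and μ (a Borel probability measure on ℝⁿ × ℝⁿ whose first marginal is F_N and second marginal is μ) with ∫ ‖x − y‖_p dK(x,y) ≤ ε. Then ∫ h(v,t,ξ) dμ(ξ) ≤ (1/N)·Σ_{i=1}^N h(v,t,ξ̂ⁱ) + ε·‖v‖_q. -/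
open MeasureTheory Filter Topology
open scoped ENNReal BigOperators

/-- `h(v,t,ξ) = max(⟨ξ,v⟩ − t, 0)`. -/
noncomputable def hfun {n : ℕ} (v : Fin n → ℝ) (t : ℝ) (ξ : Fin n → ℝ) : ℝ :=
  max (ip ξ v - t) 0

/-- The empirical distribution `(1/N)·Σᵢ δ_{ξⁱ}` of `N` samples. -/
noncomputable def empirical {n : ℕ} (N : ℕ) (ξ : Fin N → Fin n → ℝ) :
    MeasureTheory.Measure (Fin n → ℝ) :=
  (N : ℝ≥0∞)⁻¹ • ∑ i, MeasureTheory.Measure.dirac (ξ i)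

/-- The Wasserstein distance (valued in `ℝ≥0∞`) between two Borel probability measures
on ℝⁿ, with ground metric `‖·‖_p`: the infimum over couplings `K` (probability measures on
ℝⁿ × ℝⁿ with the prescribed marginals) of `∫ ‖x − y‖_p dK(x,y)`. -/
noncomputable def dW {n : ℕ} (p : ℝ≥0∞) (μ ν : MeasureTheory.Measure (Fin n → ℝ)) : ℝ≥0∞ :=
  ⨅ (K : MeasureTheory.Measure ((Fin n → ℝ) × (Fin n → ℝ)))
    (_ : MeasureTheory.IsProbabilityMeasure K)
    (_ : K.map Prod.fst = μ) (_ : K.map Prod.snd = ν),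
    ∫⁻ z, ENNReal.ofReal (lpNorm p (z.1 - z.2)) ∂K

theorem lpNorm_nonneg' {n : ℕ} (p : ℝ≥0∞) (x : Fin n → ℝ) : 0 ≤ lpNorm p x := by
  unfold _root_.lpNorm
  split_ifs
  · exact Real.iSup_nonneg fun i => abs_nonneg _
  · positivity

theorem sum_le_aux {n : ℕ} (x v : Fin n → ℝ) :
    ∑ i, |x i| * |v i| ≤ lpNorm ∞ x * lpNorm 1 v := by
  have h1 : lpNorm 1 v = ∑ i, |v i| := by simp [_root_.lpNorm]
  have h2 : lpNorm ∞ x = ⨆ i, |x i| := by simp [_root_.lpNorm]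
  rw [h1, h2, Finset.mul_sum]
  refine Finset.sum_le_sum fun i _ => ?_
  gcongr
  exact le_ciSup (f := fun i => |x i|) (Set.finite_range _).bddAbove i

theorem holder_aux {n : ℕ} (p q : ℝ≥0∞) (hp : 1 ≤ p) (hpq : 1 / p + 1 / q = 1)
    (x v : Fin n → ℝ) : ∑ i, |x i| * |v i| ≤ lpNorm p x * lpNorm q v := by
  rw [one_div, one_div] at hpq
  have hc : ENNReal.HolderConjugate p q := ENNReal.holderConjugate_iff.2 hpq
  by_cases hpt : p = ∞
  · subst hpt
    have hq : q = 1 := by simpa using hpq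
    subst hq
    exact sum_le_aux x v
  by_cases hqt : q = ∞
  · subst hqt
    have hq : p = 1 := by simpa using hpq
    subst hq
    rw [mul_comm]
    simpa only [mul_comm] using sum_le_aux v x
  have hp0 : p ≠ 0 := by rintro rfl; simp at hp
  have hq0 : q ≠ 0 := by rintro rfl; simp at hpq
  have hr : p.toReal.HolderConjugate q.toReal := by
    have hsum : p.toReal⁻¹ + q.toReal⁻¹ = 1 := by
      rw [← ENNReal.toReal_inv, ← ENNReal.toReal_inv, ← ENNReal.toReal_add (by simpa) (by simpa),
        hpq, ENNReal.toReal_one]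
    have h1 := ENNReal.toReal_pos hp0 hpt
    have h2 := ENNReal.toReal_pos hq0 hqt
    exact ⟨by simpa using hsum, h1, h2⟩
  have := Real.inner_le_Lp_mul_Lq Finset.univ (fun i => |x i|) (fun i => |v i|) hr
  simpa [_root_.lpNorm, hpt, hqt] using this

theorem hfun_le {n : ℕ} (p q : ℝ≥0∞) (hp : 1 ≤ p) (hpq : 1 / p + 1 / q = 1)
    (v : Fin n → ℝ) (t : ℝ) (x y : Fin n → ℝ) :
    hfun v t y ≤ hfun v t x + lpNorm p (x - y) * lpNorm q v := by
  have h1 := holder_aux p q hp hpq (x - y) v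
  have h2 : ip y v - ip x v ≤ ∑ i, |(x - y) i| * |v i| := by
    unfold ip
    rw [← Finset.sum_sub_distrib]
    refine Finset.sum_le_sum fun i _ => ?_
    rw [← abs_mul, Pi.sub_apply]
    have := neg_abs_le ((x i - y i) * v i)
    linarith
  have h3 := mul_nonneg (lpNorm_nonneg' p (x - y)) (lpNorm_nonneg' q v)
  unfold hfun
  refine max_le ?_ ?_
  · have := le_max_left (ip x v - t) 0
    linarith
  · have := le_max_right (ip x v - t) 0
    linarith

theorem measurable_hfun {n : ℕ} (v : Fin n → ℝ) (t : ℝ) : Measurable (hfun v t) := by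
  unfold hfun ip
  fun_prop

/-- if `μ` is a probability measure with finite first moment admitting a coupling
`K` with the empirical distribution `F_N` of transport cost at most `ε`, then
`∫ h(v,t,ξ) dμ ≤ (1/N)Σ h(v,t,ξ̂ⁱ) + ε‖v‖_q`. -/
theorem stmt5 (n : ℕ) (hn : 1 ≤ n) (p q : ℝ≥0∞) (hp : 1 ≤ p) (hpq : 1 / p + 1 / q = 1)
    (v : Fin n → ℝ) (t ε : ℝ) (hε : 0 ≤ ε)
    (N : ℕ) (hN : 1 ≤ N) (ξ : Fin N → Fin n → ℝ)
    (μ : Measure (Fin n → ℝ)) (hμ : IsProbabilityMeasure μ)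
    (hmom : Integrable (fun x => lpNorm p x) μ)
    (K : Measure ((Fin n → ℝ) × (Fin n → ℝ))) (hK : IsProbabilityMeasure K)
    (hK1 : K.map Prod.fst = empirical N ξ) (hK2 : K.map Prod.snd = μ)
    (hKcost : ∫⁻ z, ENNReal.ofReal (lpNorm p (z.1 - z.2)) ∂K ≤ ENNReal.ofReal ε) :
    ∫ x, hfun v t x ∂μ ≤ (1 / (N : ℝ)) * ∑ i, hfun v t (ξ i) + ε * lpNorm q v := by
  have hm := measurable_hfun v t
  have hh0 : ∀ x, 0 ≤ hfun v t x := fun x => le_max_right _ _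
  have hmo : Measurable fun x => ENNReal.ofReal (hfun v t x) := hm.ennreal_ofReal
  have hq0 := lpNorm_nonneg' q v
  have hN0 : (0 : ℝ) < N := by exact_mod_cast hN
  have hs0 : 0 ≤ ∑ i, hfun v t (ξ i) := Finset.sum_nonneg fun i _ => hh0 _
  rw [integral_eq_lintegral_of_nonneg_ae (Eventually.of_forall hh0) hm.aestronglyMeasurable]
  refine ENNReal.toReal_le_of_le_ofReal (by positivity) ?_
  have hemp : ∫⁻ z, ENNReal.ofReal (hfun v t z.1) ∂K
      = ENNReal.ofReal ((1 / (N : ℝ)) * ∑ i, hfun v t (ξ i)) := by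
    rw [← lintegral_map hmo measurable_fst, hK1, empirical, lintegral_smul_measure,
      lintegral_finsetSum_measure, ENNReal.ofReal_mul (by positivity),
      ENNReal.ofReal_sum_of_nonneg fun i _ => hh0 _, one_div, ENNReal.ofReal_inv_of_pos hN0,
      ENNReal.ofReal_natCast]
    simp [lintegral_dirac' _ hmo]
  rw [← hK2, lintegral_map hmo measurable_snd]
  calc ∫⁻ z, ENNReal.ofReal (hfun v t z.2) ∂K
      ≤ ∫⁻ z, (ENNReal.ofReal (hfun v t z.1)
          + ENNReal.ofReal (lpNorm p (z.1 - z.2)) * ENNReal.ofReal (lpNorm q v)) ∂K := by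
        refine lintegral_mono fun z => ?_
        rw [← ENNReal.ofReal_mul (lpNorm_nonneg' _ _),
          ← ENNReal.ofReal_add (hh0 _) (mul_nonneg (lpNorm_nonneg' _ _) hq0)]
        exact ENNReal.ofReal_le_ofReal (hfun_le p q hp hpq v t z.1 z.2)
    _ = ENNReal.ofReal ((1 / (N : ℝ)) * ∑ i, hfun v t (ξ i))
          + (∫⁻ z, ENNReal.ofReal (lpNorm p (z.1 - z.2)) ∂K) * ENNReal.ofReal (lpNorm q v) := by
        rw [lintegral_add_left (by fun_prop),
          lintegral_mul_const' _ _ ENNReal.ofReal_ne_top, ← hemp]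
    _ ≤ ENNReal.ofReal ((1 / (N : ℝ)) * ∑ i, hfun v t (ξ i))
          + ENNReal.ofReal ε * ENNReal.ofReal (lpNorm q v) := by gcongr
    _ = _ := by
        rw [← ENNReal.ofReal_mul hε, ← ENNReal.ofReal_add (by positivity) (by positivity)]
end

section
/- (Theorem 2, inner worst-case expectation with support set) Let a, b ∈ ℝⁿ with a ≤ b componentwise, let ξ̂¹,…,ξ̂ᴺ ∈ [a,b] (N ≥ 1) with empirical distribution F_N, let v ∈ ℝⁿ, t ∈ ℝ and ε ≥ 0. Then the supremum of ∫ h(v,t,ξ) dμ(ξ) over all Borel probability measures μ supported on [a,b] with d_W(F_N,μ) ≤ ε equals the optimal value of the convex program minimizing (1/N)·Σ_{i=1}^N s_i + λ·ε over s ∈ ℝᴺ, λ ∈ ℝ, and γ_i, η_i ∈ ℝⁿ (i = 1,…,N) subject to ⟨v + γ_i − η_i, ξ̂ⁱ⟩ − ⟨γ_i,a⟩ + ⟨η_i,b⟩ − t ≤ s_i, ‖v + γ_i − η_i‖_q ≤ λ, γ_i ≥ 0, η_i ≥ 0 and s_i ≥ 0 for all i. -/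
open MeasureTheory Filter Topology
open scoped ENNReal BigOperators

theorem lpN_eq_norm {n : ℕ} (p : ℝ≥0∞) [Fact (1 ≤ p)] (x : Fin n → ℝ) :
    lpNorm p x = ‖WithLp.toLp p x‖ := by
  unfold _root_.lpNorm
  split_ifs with h
  · subst h
    rw [PiLp.norm_eq_ciSup]; simp
  · have h1 : 1 ≤ p := Fact.out
    rw [PiLp.norm_eq_sum (ENNReal.toReal_pos (by positivity) h)]
    simp

theorem lpN_cont {n : ℕ} (p : ℝ≥0∞) (hp : 1 ≤ p) :
    Continuous (fun x : Fin n → ℝ => lpNorm p x) := by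
  have : Fact (1 ≤ p) := ⟨hp⟩
  simp_rw [lpN_eq_norm]
  exact (PiLp.continuous_toLp p _).norm

theorem lpN_nonneg {n : ℕ} (p : ℝ≥0∞) (hp : 1 ≤ p) (x : Fin n → ℝ) : 0 ≤ lpNorm p x := by
  have : Fact (1 ≤ p) := ⟨hp⟩
  rw [lpN_eq_norm]; positivity

theorem lpN_ball_convex {n : ℕ} (p : ℝ≥0∞) (hp : 1 ≤ p) (r : ℝ) :
    Convex ℝ {x : Fin n → ℝ | lpNorm p x ≤ r} := by
  have : Fact (1 ≤ p) := ⟨hp⟩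
  intro x hx y hy α β hα hβ hab
  simp only [Set.mem_ofPred_eq, lpN_eq_norm] at *
  rw [WithLp.toLp_add, WithLp.toLp_smul, WithLp.toLp_smul]
  refine (norm_add_le _ _).trans ?_
  rw [norm_smul, norm_smul, Real.norm_of_nonneg hα, Real.norm_of_nonneg hβ]
  calc _ ≤ α * r + β * r := by gcongr
    _ = r := by rw [← add_mul, hab, one_mul]

theorem abs_le_lpNorm {n : ℕ} (p : ℝ≥0∞) (hp : 1 ≤ p) (x : Fin n → ℝ) (i : Fin n) :
    |x i| ≤ lpNorm p x := by
  have : Fact (1 ≤ p) := ⟨hp⟩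
  rw [lpN_eq_norm]
  simpa using PiLp.norm_apply_le (WithLp.toLp p x) i

theorem lpN_smul' {n : ℕ} (p : ℝ≥0∞) (hp : 1 ≤ p) (c : ℝ) (hc : 0 ≤ c) (x : Fin n → ℝ) :
    lpNorm p (c • x) = c * lpNorm p x := by
  have : Fact (1 ≤ p) := ⟨hp⟩
  rw [lpN_eq_norm, lpN_eq_norm, WithLp.toLp_smul, norm_smul, Real.norm_of_nonneg hc]

theorem lpN_zero' {n : ℕ} (p : ℝ≥0∞) (hp : 1 ≤ p) : lpNorm p (0 : Fin n → ℝ) = 0 := by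
  have : Fact (1 ≤ p) := ⟨hp⟩
  rw [lpN_eq_norm]; simp

theorem lpN_neg' {n : ℕ} (p : ℝ≥0∞) (x : Fin n → ℝ) : lpNorm p (-x) = lpNorm p x := by
  simp [_root_.lpNorm]

theorem lpN_sub_comm' {n : ℕ} (p : ℝ≥0∞) (x y : Fin n → ℝ) :
    lpNorm p (x - y) = lpNorm p (y - x) := by
  rw [← lpN_neg', neg_sub]

theorem lpN_ball_compact {n : ℕ} (p : ℝ≥0∞) (hp : 1 ≤ p) (r : ℝ) :
    IsCompact {x : Fin n → ℝ | lpNorm p x ≤ r} := by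
  refine IsCompact.of_isClosed_subset (isCompact_Icc (a := fun _ => -r) (b := fun _ => r))
    (isClosed_le (lpN_cont p hp) continuous_const) ?_
  intro x hx
  have h : ∀ i, |x i| ≤ r := fun i => (abs_le_lpNorm p hp x i).trans hx
  exact ⟨fun i => (abs_le.1 (h i)).1, fun i => (abs_le.1 (h i)).2⟩

theorem lpN_one {n : ℕ} (x : Fin n → ℝ) : lpNorm 1 x = ∑ i, |x i| := by
  simp [_root_.lpNorm]

theorem one_le_conj {p q : ℝ≥0∞} (hpq : 1 / p + 1 / q = 1) : 1 ≤ q := by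
  have : 1 / q ≤ 1 := (le_add_self : 1 / q ≤ 1 / p + 1 / q).trans hpq.le
  rw [one_div] at this
  exact ENNReal.inv_le_one.1 this

theorem conj_cases {p q : ℝ≥0∞} (hp : 1 ≤ p) (hpq : 1 / p + 1 / q = 1) :
    (p = 1 ∧ q = ∞) ∨ (p = ∞ ∧ q = 1) ∨
      (p ≠ ∞ ∧ q ≠ ∞ ∧ p.toReal.HolderConjugate q.toReal) := by
  have hq := one_le_conj hpq
  by_cases h1 : p = ∞
  · subst h1
    right; left
    simpa using hpq
  by_cases h2 : q = ∞
  · subst h2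
    left
    simpa using hpq
  right; right
  refine ⟨h1, h2, ?_⟩
  have hp0 : p ≠ 0 := by positivity
  have hq0 : q ≠ 0 := by positivity
  have := congrArg ENNReal.toReal hpq
  rw [ENNReal.toReal_add (by simp [hp0]) (by simp [hq0])] at this
  simp at this
  rw [Real.holderConjugate_iff]
  refine ⟨?_, this⟩
  have hq' : 0 < q.toReal⁻¹ := inv_pos.2 (ENNReal.toReal_pos hq0 h2)
  have hp' := ENNReal.toReal_pos hp0 h1
  by_contra hcon
  have := (one_le_inv₀ hp').2 (not_lt.1 hcon)
  linarith

theorem ip_le_sum_abs {n : ℕ} (w x : Fin n → ℝ) : ip w x ≤ ∑ i, |w i| * |x i| := by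
  unfold ip
  exact Finset.sum_le_sum fun i _ => by rw [← abs_mul]; exact le_abs_self _

theorem ip_le {n : ℕ} {p q : ℝ≥0∞} (hp : 1 ≤ p) (hpq : 1 / p + 1 / q = 1) (w x : Fin n → ℝ) :
    ip w x ≤ lpNorm q w * lpNorm p x := by
  rcases conj_cases hp hpq with ⟨rfl, rfl⟩ | ⟨rfl, rfl⟩ | ⟨h1, h2, h3⟩
  · refine (ip_le_sum_abs w x).trans ?_
    rw [lpN_one, Finset.mul_sum]
    gcongr
    exact abs_le_lpNorm _ le_top _ _
  · refine (ip_le_sum_abs w x).trans ?_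
    rw [lpN_one, Finset.sum_mul]
    gcongr
    exact abs_le_lpNorm _ le_top _ _
  · simp only [_root_.lpNorm, h1, h2, if_false]
    exact Real.inner_le_Lp_mul_Lq _ _ _ h3.symm

theorem exists_dual {n : ℕ} (hn : 1 ≤ n) {p q : ℝ≥0∞} (hp : 1 ≤ p) (hpq : 1 / p + 1 / q = 1)
    (x : Fin n → ℝ) : ∃ w : Fin n → ℝ, lpNorm q w ≤ 1 ∧ ip w x = lpNorm p x := by
  have : Nonempty (Fin n) := ⟨⟨0, hn⟩⟩
  rcases conj_cases hp hpq with ⟨rfl, rfl⟩ | ⟨rfl, rfl⟩ | ⟨h1, h2, h3⟩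
  · refine ⟨fun i => SignType.sign (x i), ?_, ?_⟩
    · simp only [_root_.lpNorm, if_true]
      refine ciSup_le fun i => ?_
      rcases lt_trichotomy (x i) 0 with h | h | h <;> simp [h]
    · rw [lpN_one]
      simp [ip, sign_mul_self]
  · obtain ⟨i, hi⟩ := exists_eq_ciSup_of_finite (f := fun i => |x i|)
    refine ⟨Pi.single i (SignType.sign (x i) : ℝ), ?_, ?_⟩
    · rw [lpN_one, Finset.sum_eq_single i]
      · rcases lt_trichotomy (x i) 0 with h | h | h <;> simp [h]
      · intro j _ hj; simp [hj]
      · simp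
    · simp only [_root_.lpNorm, if_true]
      rw [← hi]
      unfold ip
      rw [Finset.sum_eq_single i]
      · simp [sign_mul_self]
      · intro j _ hj; simp [hj]
      · simp
  · obtain ⟨g, hg, hg2⟩ := (NNReal.isGreatest_Lp Finset.univ (fun i => ‖x i‖₊) h3).1
    have hgR := congrArg (fun z : NNReal => (z : ℝ)) hg2
    have hgq : ∑ i, (g i : ℝ) ^ q.toReal ≤ 1 := by exact_mod_cast hg
    push_cast at hgR
    refine ⟨fun i => SignType.sign (x i) * g i, ?_, ?_⟩
    · simp only [_root_.lpNorm, h2, if_false]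
      refine Real.rpow_le_one (Finset.sum_nonneg fun i _ => by positivity) ?_ (by positivity)
      refine le_trans (Finset.sum_le_sum fun i _ => ?_) hgq
      refine Real.rpow_le_rpow (abs_nonneg _) ?_ (by positivity)
      rcases lt_trichotomy (x i) 0 with h | h | h <;> simp [h]
    · simp only [_root_.lpNorm, h1, if_false, ip]
      simp only [Real.norm_eq_abs] at hgR
      rw [← hgR]
      refine Finset.sum_congr rfl fun i _ => ?_
      rw [mul_right_comm, sign_mul_self]

theorem ip_cont {n : ℕ} : Continuous (fun z : (Fin n → ℝ) × (Fin n → ℝ) => ip z.1 z.2) := by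
  unfold ip; fun_prop

theorem ip_comm' {n : ℕ} (w x : Fin n → ℝ) : ip w x = ip x w := by
  simp [ip, mul_comm]

theorem ip_add_left {n : ℕ} (u w x : Fin n → ℝ) : ip (u + w) x = ip u x + ip w x := by
  simp [ip, add_mul, Finset.sum_add_distrib]

theorem ip_sub_left {n : ℕ} (u w x : Fin n → ℝ) : ip (u - w) x = ip u x - ip w x := by
  simp [ip, sub_mul, Finset.sum_sub_distrib]

theorem ip_sub_right {n : ℕ} (u w x : Fin n → ℝ) : ip x (u - w) = ip x u - ip x w := by
  simp [ip, mul_sub, Finset.sum_sub_distrib]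

theorem ip_add_right {n : ℕ} (u w x : Fin n → ℝ) : ip x (u + w) = ip x u + ip x w := by
  simp [ip, mul_add, Finset.sum_add_distrib]

theorem ip_smul_left {n : ℕ} (c : ℝ) (w x : Fin n → ℝ) : ip (c • w) x = c * ip w x := by
  simp [ip, Finset.mul_sum, mul_assoc]

theorem ip_smul_right {n : ℕ} (c : ℝ) (w x : Fin n → ℝ) : ip w (c • x) = c * ip w x := by
  rw [ip_comm', ip_smul_left, ip_comm']

theorem ip_mono {n : ℕ} {g x y : Fin n → ℝ} (hg : ∀ j, 0 ≤ g j) (h : ∀ j, x j ≤ y j) :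
    ip g x ≤ ip g y :=
  Finset.sum_le_sum fun j _ => mul_le_mul_of_nonneg_left (h j) (hg j)

theorem hfun_cont {n : ℕ} (v : Fin n → ℝ) (t : ℝ) : Continuous (hfun v t) := by
  unfold hfun ip; fun_prop

/-- Weak duality, pointwise form. -/
theorem pointwise_bound {n : ℕ} {p q : ℝ≥0∞} (hp : 1 ≤ p) (hpq : 1 / p + 1 / q = 1)
    (a b v x γ η : Fin n → ℝ) (t s lam : ℝ)
    (h1 : ip (v + γ - η) x - ip γ a + ip η b - t ≤ s)
    (h2 : lpNorm q (v + γ - η) ≤ lam) (hγ : ∀ j, 0 ≤ γ j) (hη : ∀ j, 0 ≤ η j) (hs : 0 ≤ s)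
    (y : Fin n → ℝ) (hy : ∀ i, a i ≤ y i ∧ y i ≤ b i) :
    hfun v t y ≤ s + lam * lpNorm p (x - y) := by
  have hlam : 0 ≤ lam := (lpN_nonneg q (one_le_conj hpq) _).trans h2
  have hn := lpN_nonneg p hp (x - y)
  refine max_le ?_ (by positivity)
  have e1 := ip_le hp hpq (v + γ - η) (y - x)
  rw [lpN_sub_comm' p y x, ip_sub_right] at e1
  have e2 := mul_le_mul_of_nonneg_right h2 hn
  have e3 := ip_mono hγ fun i => (hy i).1
  have e4 := ip_mono hη fun i => (hy i).2
  have e5 : ip (v + γ - η) y = ip v y + ip γ y - ip η y := by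
    rw [ip_sub_left, ip_add_left]
  rw [ip_comm' y v]
  linarith

/-- Strong duality for one sample, via the minimax theorem. -/
theorem exists_multipliers {n : ℕ} (hn : 1 ≤ n) {p q : ℝ≥0∞} (hp : 1 ≤ p)
    (hpq : 1 / p + 1 / q = 1) (a b v x : Fin n → ℝ) (hab : ∀ i, a i ≤ b i) (t s lam : ℝ)
    (hlam : 0 ≤ lam)
    (h : ∀ y : Fin n → ℝ, (∀ i, a i ≤ y i ∧ y i ≤ b i) → ip v y - t - lam * lpNorm p (x - y) ≤ s) :
    ∃ γ η : Fin n → ℝ, ip (v + γ - η) x - ip γ a + ip η b - t ≤ s ∧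
      lpNorm q (v + γ - η) ≤ lam ∧ (∀ j, 0 ≤ γ j) ∧ (∀ j, 0 ≤ η j) := by
  have hq := one_le_conj hpq
  let f : (Fin n → ℝ) → (Fin n → ℝ) → ℝ := fun w y => ip v y - ip w (y - x)
  have hf1 : ∀ y, Continuous fun w => f w y := fun y => by
    simp only [f, ip]; fun_prop
  have hf2 : ∀ w, Continuous fun y => f w y := fun w => by
    simp only [f, ip]; fun_prop
  have cX := lpN_ball_convex (n := n) q hq lam
  have cY : Convex ℝ (Set.Icc a b) := convex_Icc a b
  have hsad : ∃ w ∈ {w : Fin n → ℝ | lpNorm q w ≤ lam}, ∃ y ∈ Set.Icc a b,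
      IsSaddlePointOn {w : Fin n → ℝ | lpNorm q w ≤ lam} (Set.Icc a b) f w y := by
    refine Sion.exists_isSaddlePointOn ⟨0, ?_⟩ cX (lpN_ball_compact q hq lam)
      (fun y _ => (hf1 y).lowerSemicontinuous.lowerSemicontinuousOn _) (fun y _ => ?_) cY
      ⟨a, le_refl _, hab⟩ isCompact_Icc
      (fun w _ => (hf2 w).upperSemicontinuous.upperSemicontinuousOn _) (fun w _ => ?_)
    · simpa [lpN_zero' q hq] using hlam
    · refine ConvexOn.quasiconvexOn ⟨cX, fun w1 _ w2 _ α β _ _ hs => le_of_eq ?_⟩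
      simp only [f, ip_add_left, ip_smul_left, smul_eq_mul]
      linear_combination (-ip v y) * hs
    · refine ConcaveOn.quasiconcaveOn ⟨cY, fun w1 _ w2 _ α β _ _ hs => le_of_eq ?_⟩
      simp only [f, ip_add_right, ip_smul_right, ip_sub_right, smul_eq_mul]
      linear_combination (ip w x) * hs
  obtain ⟨w, hw, y0, hy0, hsp⟩ := hsad
  obtain ⟨u, hu1, hu2⟩ := exists_dual hn hp hpq (y0 - x)
  have key : ∀ y, (∀ i, a i ≤ y i ∧ y i ≤ b i) → ip v y - ip w (y - x) ≤ s + t := by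
    intro y hy
    have := hsp (lam • u) (by
      change lpNorm q (lam • u) ≤ lam
      rw [lpN_smul' q hq _ hlam]
      nlinarith) y ⟨fun i => (hy i).1, fun i => (hy i).2⟩
    simp only [f] at this
    rw [ip_smul_left, hu2, lpN_sub_comm'] at this
    have h2 := h y0 fun i => ⟨hy0.1 i, hy0.2 i⟩
    linarith
  refine ⟨fun j => max (w j - v j) 0, fun j => max (v j - w j) 0, ?_, ?_, ?_, ?_⟩
  · have hw' : v + (fun j => max (w j - v j) 0) - (fun j => max (v j - w j) 0) = w := by
      ext j
      simp only [Pi.add_apply, Pi.sub_apply]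
      rcases le_total (w j) (v j) with h | h
      · rw [max_eq_right (by linarith), max_eq_left (by linarith)]; ring
      · rw [max_eq_left (by linarith), max_eq_right (by linarith)]; ring
    rw [hw']
    have hk := key (fun j => if w j ≤ v j then b j else a j) (fun i => by
      have := hab i
      split_ifs <;> simp [this])
    rw [ip_sub_right] at hk
    have e : ip v (fun j => if w j ≤ v j then b j else a j) -
        ip w (fun j => if w j ≤ v j then b j else a j) =
        ip (fun j => max (v j - w j) 0) b - ip (fun j => max (w j - v j) 0) a := by
      simp only [ip, ← Finset.sum_sub_distrib]
      refine Finset.sum_congr rfl fun j _ => ?_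
      split_ifs with h
      · rw [max_eq_left (by linarith), max_eq_right (by linarith)]; ring
      · rw [max_eq_right (by linarith), max_eq_left (by linarith)]; ring
    linarith
  · have hw' : v + (fun j => max (w j - v j) 0) - (fun j => max (v j - w j) 0) = w := by
      ext j
      simp only [Pi.add_apply, Pi.sub_apply]
      rcases le_total (w j) (v j) with h | h
      · rw [max_eq_right (by linarith), max_eq_left (by linarith)]; ring
      · rw [max_eq_left (by linarith), max_eq_right (by linarith)]; ring
    rw [hw']; exact hw
  · intro j; exact le_max_right _ _
  · intro j; exact le_max_right _ _

/-- The box `[a,b]`. -/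
def bx {n : ℕ} (a b : Fin n → ℝ) : Set (Fin n → ℝ) := {x | ∀ i, a i ≤ x i ∧ x i ≤ b i}

theorem bx_eq {n : ℕ} (a b : Fin n → ℝ) : bx a b = Set.Icc a b := by
  ext x; simp [bx, Set.mem_Icc, Pi.le_def, forall_and]

theorem bx_compact {n : ℕ} (a b : Fin n → ℝ) : IsCompact (bx a b) := by
  rw [bx_eq]; exact isCompact_Icc

theorem bx_meas {n : ℕ} (a b : Fin n → ℝ) : MeasurableSet (bx a b) :=
  (bx_compact a b).measurableSet

theorem hfun_bound {n : ℕ} (a b v : Fin n → ℝ) (t : ℝ) :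
    ∃ C, ∀ y ∈ bx a b, ‖hfun v t y‖ ≤ C :=
  (bx_compact a b).exists_bound_of_continuousOn (hfun_cont v t).continuousOn

theorem hfun_integrable {n : ℕ} (a b v : Fin n → ℝ) (t : ℝ)
    (K : Measure ((Fin n → ℝ) × (Fin n → ℝ))) [IsFiniteMeasure K]
    (hK : ∀ᵐ z ∂K, z.2 ∈ bx a b) : Integrable (fun z => hfun v t z.2) K := by
  obtain ⟨C, hC⟩ := hfun_bound a b v t
  refine Integrable.of_bound
    (((hfun_cont v t).comp continuous_snd).aestronglyMeasurable) C ?_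
  filter_upwards [hK] with z hz using hC _ hz

theorem empirical_prob {n : ℕ} (N : ℕ) (hN : 1 ≤ N) (ξ : Fin N → Fin n → ℝ) :
    IsProbabilityMeasure (empirical N ξ) := by
  constructor
  simp only [empirical, Measure.smul_apply, Measure.finsetSum_apply, measure_univ]
  simp only [Finset.sum_const, Finset.card_univ, Fintype.card_fin, nsmul_eq_mul, mul_one,
    smul_eq_mul]
  exact ENNReal.inv_mul_cancel (by simp; omega) (by simp)

theorem empirical_ae {n : ℕ} (N : ℕ) (ξ : Fin N → Fin n → ℝ) :
    ∀ᵐ x ∂(empirical N ξ), x ∈ Set.range ξ := by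
  rw [ae_iff]
  have hm : MeasurableSet (Set.range ξ)ᶜ := (Set.finite_range ξ).measurableSet.compl
  change (empirical N ξ) (Set.range ξ)ᶜ = 0
  simp only [empirical, Measure.smul_apply, Measure.finsetSum_apply, Measure.dirac_apply' _ hm]
  simp

theorem empirical_integrable {n : ℕ} (N : ℕ) (hN : 1 ≤ N) (ξ : Fin N → Fin n → ℝ)
    (c : (Fin n → ℝ) → ℝ) : Integrable c (empirical N ξ) := by
  unfold empirical
  refine Integrable.smul_measure ?_ (by simp; omega)
  rw [integrable_finsetSum_measure]
  intro i _
  exact integrable_dirac (by simp)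

theorem empirical_integral {n : ℕ} (N : ℕ) (ξ : Fin N → Fin n → ℝ)
    (c : (Fin n → ℝ) → ℝ) : ∫ x, c x ∂(empirical N ξ) = (1 / (N : ℝ)) * ∑ i, c (ξ i) := by
  unfold empirical
  rw [integral_smul_measure, integral_finsetSum_measure]
  · simp
  · intro i _
    exact integrable_dirac (by simp)

/-- Weak duality for one coupling. -/
theorem weak_coupling {n : ℕ} {p : ℝ≥0∞} (hp : 1 ≤ p)
    (a b v : Fin n → ℝ) (t : ℝ) (N : ℕ) (hN : 1 ≤ N) (ξ : Fin N → Fin n → ℝ)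
    (s : Fin N → ℝ) (lam : ℝ) (hlam : 0 ≤ lam)
    (hs : ∀ i, ∀ y ∈ bx a b, hfun v t y ≤ s i + lam * lpNorm p (ξ i - y))
    (K : Measure ((Fin n → ℝ) × (Fin n → ℝ))) [IsProbabilityMeasure K]
    (h1 : K.map Prod.fst = empirical N ξ) (h2 : ∀ᵐ z ∂K, z.2 ∈ bx a b)
    (e : ℝ) (he : 0 ≤ e)
    (h3 : ∫⁻ z, ENNReal.ofReal (lpNorm p (z.1 - z.2)) ∂K ≤ ENNReal.ofReal e) :
    ∫ z, hfun v t z.2 ∂K ≤ (1 / (N : ℝ)) * ∑ i, s i + lam * e := by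
  have hc : ∀ x : Fin n → ℝ, ∃ c : ℝ, (∀ i, ξ i = x → c ≤ s i) ∧
      (x ∈ Set.range ξ → ∀ y ∈ bx a b, hfun v t y ≤ c + lam * lpNorm p (x - y)) := by
    intro x
    by_cases hx : x ∈ Set.range ξ
    · obtain ⟨j, hj⟩ := hx
      obtain ⟨i, hi, hmin⟩ := Finset.exists_min_image (Finset.univ.filter fun i => ξ i = x) s
        ⟨j, by simp [hj]⟩
      simp only [Finset.mem_filter, Finset.mem_univ, true_and] at hi hmin
      exact ⟨s i, hmin, fun _ => hi ▸ hs i⟩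
    · exact ⟨0, fun i hi => absurd ⟨i, hi⟩ hx, fun h => absurd h hx⟩
  choose c hc1 hc2 using hc
  have hci : Integrable c (K.map Prod.fst) := h1 ▸ empirical_integrable N hN ξ c
  have hci2 : Integrable (fun z : (Fin n → ℝ) × (Fin n → ℝ) => c z.1) K :=
    hci.comp_measurable measurable_fst
  have hcint : ∫ z, c z.1 ∂K ≤ (1 / (N : ℝ)) * ∑ i, s i := by
    rw [← integral_map measurable_fst.aemeasurable hci.aestronglyMeasurable, h1,
      empirical_integral]
    gcongr with i
    exact hc1 _ i rfl
  have hdc : Continuous fun z : (Fin n → ℝ) × (Fin n → ℝ) => lpNorm p (z.1 - z.2) :=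
    (lpN_cont p hp).comp (continuous_fst.sub continuous_snd)
  have hdn : ∀ z : (Fin n → ℝ) × (Fin n → ℝ), 0 ≤ lpNorm p (z.1 - z.2) :=
    fun z => lpN_nonneg p hp _
  have hdi : Integrable (fun z : (Fin n → ℝ) × (Fin n → ℝ) => lpNorm p (z.1 - z.2)) K := by
    refine ⟨hdc.aestronglyMeasurable, ?_⟩
    rw [hasFiniteIntegral_iff_ofReal (Eventually.of_forall hdn)]
    exact h3.trans_lt ENNReal.ofReal_lt_top
  have hdint : ∫ z, lpNorm p (z.1 - z.2) ∂K ≤ e := by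
    rw [integral_eq_lintegral_of_nonneg_ae (Eventually.of_forall hdn) hdc.aestronglyMeasurable]
    exact ENNReal.toReal_le_of_le_ofReal he h3
  have hr : ∀ᵐ z ∂K, z.1 ∈ Set.range ξ :=
    ae_of_ae_map measurable_fst.aemeasurable (h1 ▸ empirical_ae N ξ)
  calc ∫ z, hfun v t z.2 ∂K ≤ ∫ z, (c z.1 + lam * lpNorm p (z.1 - z.2)) ∂K := by
        refine integral_mono_ae (hfun_integrable a b v t K h2) (hci2.add (hdi.const_mul lam)) ?_
        filter_upwards [h2, hr] with z hz1 hz2 using hc2 _ hz2 _ hz1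
    _ = ∫ z, c z.1 ∂K + lam * ∫ z, lpNorm p (z.1 - z.2) ∂K := by
        rw [integral_add hci2 (hdi.const_mul lam), integral_const_mul]
    _ ≤ _ := by gcongr

/-- The set of (cost, value) pairs of transport plans. -/
def planSet {n : ℕ} (p : ℝ≥0∞) (a b v : Fin n → ℝ) (t : ℝ) (N : ℕ) (ξ : Fin N → Fin n → ℝ) :
    Set (ℝ × ℝ) :=
  {cr | 0 ≤ cr.1 ∧ ∃ K : Measure ((Fin n → ℝ) × (Fin n → ℝ)), IsProbabilityMeasure K ∧
    K.map Prod.fst = empirical N ξ ∧ (∀ᵐ z ∂K, z.2 ∈ bx a b) ∧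
    ∫⁻ z, ENNReal.ofReal (lpNorm p (z.1 - z.2)) ∂K ≤ ENNReal.ofReal cr.1 ∧
    ∫ z, hfun v t z.2 ∂K = cr.2}

theorem planSet_convex {n : ℕ} (p : ℝ≥0∞) (a b v : Fin n → ℝ) (t : ℝ) (N : ℕ)
    (ξ : Fin N → Fin n → ℝ) : Convex ℝ (planSet p a b v t N ξ) := by
  rintro ⟨c1, r1⟩ ⟨hc1, K1, hK1, m1, s1, d1, i1⟩ ⟨c2, r2⟩ ⟨hc2, K2, hK2, m2, s2, d2, i2⟩ α β hα hβ hs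
  simp only at hc1 hc2 d1 d2 i1 i2
  have hsum : ENNReal.ofReal α + ENNReal.ofReal β = 1 := by
    rw [← ENNReal.ofReal_add hα hβ, hs, ENNReal.ofReal_one]
  refine ⟨by simp only [Prod.smul_mk, Prod.mk_add_mk, smul_eq_mul]; positivity,
    ENNReal.ofReal α • K1 + ENNReal.ofReal β • K2, ⟨?_⟩, ?_, ?_, ?_, ?_⟩
  · simp [hsum]
  · rw [Measure.map_add _ _ measurable_fst, Measure.map_smul, Measure.map_smul, m1, m2,
      ← add_smul, hsum, one_smul]
  · rw [ae_add_measure_iff]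
    exact ⟨Measure.ae_smul_measure s1 _, Measure.ae_smul_measure s2 _⟩
  · rw [lintegral_add_measure, lintegral_smul_measure, lintegral_smul_measure]
    simp only [Prod.smul_mk, Prod.mk_add_mk, smul_eq_mul]
    rw [ENNReal.ofReal_add (by positivity) (by positivity), ENNReal.ofReal_mul hα,
      ENNReal.ofReal_mul hβ]
    gcongr
  · have j1 := hfun_integrable a b v t K1 s1
    have j2 := hfun_integrable a b v t K2 s2
    rw [integral_add_measure (j1.smul_measure ENNReal.ofReal_ne_top)
      (j2.smul_measure ENNReal.ofReal_ne_top), integral_smul_measure, integral_smul_measure,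
      i1, i2, ENNReal.toReal_ofReal hα, ENNReal.toReal_ofReal hβ]
    simp

theorem planSet_mem {n : ℕ} {p : ℝ≥0∞} (hp : 1 ≤ p) (a b v : Fin n → ℝ) (t : ℝ) (N : ℕ)
    (hN : 1 ≤ N) (ξ y : Fin N → Fin n → ℝ) (hy : ∀ i, y i ∈ bx a b) :
    ((1 / (N : ℝ)) * ∑ i, lpNorm p (ξ i - y i), (1 / (N : ℝ)) * ∑ i, hfun v t (y i)) ∈
      planSet p a b v t N ξ := by
  have hdn : ∀ i, 0 ≤ lpNorm p (ξ i - y i) := fun i => lpN_nonneg p hp _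
  have hN0 : (N : ℝ≥0∞) ≠ 0 := by simp; omega
  refine ⟨mul_nonneg (by positivity) (Finset.sum_nonneg fun i _ => hdn i),
    (N : ℝ≥0∞)⁻¹ • ∑ i, Measure.dirac (ξ i, y i), ⟨?_⟩, ?_, ?_, ?_, ?_⟩
  · simp only [Measure.smul_apply, Measure.finsetSum_apply, measure_univ]
    simp only [Finset.sum_const, Finset.card_univ, Fintype.card_fin, nsmul_eq_mul, mul_one,
      smul_eq_mul]
    exact ENNReal.inv_mul_cancel hN0 (by simp)
  · rw [Measure.map_smul, empirical]
    congr 1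
    rw [← Measure.mapₗ_apply_of_measurable measurable_fst, map_sum]
    refine Finset.sum_congr rfl fun i _ => ?_
    rw [Measure.mapₗ_apply_of_measurable measurable_fst, Measure.map_dirac' measurable_fst]
  · refine Measure.ae_smul_measure ?_ _
    rw [ae_iff]
    have hm : MeasurableSet {z : (Fin n → ℝ) × (Fin n → ℝ) | ¬ z.2 ∈ bx a b} :=
      (measurable_snd (bx_meas a b)).compl
    simp only [Measure.finsetSum_apply, Measure.dirac_apply' _ hm]
    simp [hy]
  · have hm : Measurable fun z : (Fin n → ℝ) × (Fin n → ℝ) =>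
        ENNReal.ofReal (lpNorm p (z.1 - z.2)) :=
      ((lpN_cont p hp).comp (continuous_fst.sub continuous_snd)).measurable.ennreal_ofReal
    rw [lintegral_smul_measure, lintegral_finsetSum_measure]
    simp only [lintegral_dirac' _ hm]
    rw [ENNReal.ofReal_mul (by positivity), ENNReal.ofReal_sum_of_nonneg fun i _ => hdn i,
      one_div, ENNReal.ofReal_inv_of_pos (by positivity), ENNReal.ofReal_natCast, smul_eq_mul]
  · rw [integral_smul_measure, integral_finsetSum_measure]
    · simp
    · intro i _
      exact integrable_dirac (by simp)

/-- Lagrange multiplier for the transport budget. -/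
theorem exists_lam (A : Set (ℝ × ℝ)) (hA : Convex ℝ A) (r0 : ℝ) (h0 : (0, r0) ∈ A)
    (ε V : ℝ) (hε : 0 < ε) (hV : ∀ c r, (c, r) ∈ A → c ≤ ε → r ≤ V) :
    ∃ lam : ℝ, 0 ≤ lam ∧ ∀ c r, (c, r) ∈ A → r - lam * c ≤ V - lam * ε := by
  obtain ⟨f, u, hf1, hf2⟩ := geometric_hahn_banach_open (s := Set.Iio ε ×ˢ Set.Ioi V) (t := A)
    ((convex_Iio ε).prod (convex_Ioi V)) (isOpen_Iio.prod isOpen_Ioi) hA (by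
      rw [Set.disjoint_left]
      rintro ⟨c, r⟩ ⟨h1, h2⟩ h3
      exact absurd (hV c r h3 (le_of_lt h1)) (not_le.2 h2))
  have hf : ∀ c r, f (c, r) = c * f (1, 0) + r * f (0, 1) := by
    intro c r
    rw [← smul_eq_mul, ← smul_eq_mul, ← map_smul, ← map_smul, ← map_add]
    simp
  set α := f (1, 0)
  set β := f (0, 1)
  have g1 : ∀ c r, c < ε → V < r → c * α + r * β < u := fun c r h1 h2 => by
    rw [← hf]; exact hf1 _ ⟨h1, h2⟩
  have g2 : ∀ c r, (c, r) ∈ A → u ≤ c * α + r * β := fun c r h => by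
    rw [← hf]; exact hf2 _ h
  have hu := g2 _ _ h0
  have hr0 := hV _ _ h0 hε.le
  have hβ : β < 0 := by
    have := g1 0 (V + 1) hε (by linarith)
    nlinarith
  have hα : 0 ≤ α := by
    by_contra hneg
    push Not at hneg
    have := g1 (min 0 ((u - (V + 1) * β) / α)) (V + 1)
      (lt_of_le_of_lt (min_le_left _ _) hε) (by linarith)
    have h3 : (u - (V + 1) * β) / α * α ≤ min 0 ((u - (V + 1) * β) / α) * α :=
      mul_le_mul_of_nonpos_right (min_le_right _ _) hneg.le
    rw [div_mul_cancel₀ _ hneg.ne] at h3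
    linarith
  have hlim : ε * α + V * β ≤ u := by
    refine le_of_forall_pos_le_add fun δ hδ => ?_
    have hD : 0 < α - β := by linarith
    have := g1 (ε - δ / (α - β)) (V + δ / (α - β)) (by have := div_pos hδ hD; linarith)
      (by have := div_pos hδ hD; linarith)
    have e : δ / (α - β) * (α - β) = δ := div_mul_cancel₀ _ hD.ne'
    linarith
  refine ⟨α / (-β), div_nonneg hα (by linarith), fun c r h => ?_⟩
  have := g2 c r h
  have hb : 0 < -β := by linarith
  have e : α / (-β) * (-β) = α := div_mul_cancel₀ _ hb.ne'
  set l := α / (-β)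
  rw [← e] at this hlim
  nlinarith

/-- Theorem 2, inner worst-case expectation with support set: the supremum of
`∫ h(v,t,·) dμ` over probability measures supported on the box `[a,b]` in the Wasserstein
ball of radius `ε` around `F_N` equals the optimal value of the dual convex program. -/
theorem stmt9 (n : ℕ) (hn : 1 ≤ n) (p q : ℝ≥0∞) (hp : 1 ≤ p) (hpq : 1 / p + 1 / q = 1)
    (a b : Fin n → ℝ) (hab : ∀ i, a i ≤ b i)
    (N : ℕ) (hN : 1 ≤ N) (ξ : Fin N → Fin n → ℝ)
    (hξ : ∀ k, ∀ i, a i ≤ ξ k i ∧ ξ k i ≤ b i)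
    (v : Fin n → ℝ) (t ε : ℝ) (hε : 0 ≤ ε) :
    sSup {r : ℝ | ∃ μ : Measure (Fin n → ℝ), IsProbabilityMeasure μ ∧
        μ {x : Fin n → ℝ | ∀ i, a i ≤ x i ∧ x i ≤ b i}ᶜ = 0 ∧
        dW p (empirical N ξ) μ ≤ ENNReal.ofReal ε ∧ r = ∫ x, hfun v t x ∂μ} =
      sInf {y : ℝ | ∃ (s : Fin N → ℝ) (lam : ℝ) (γ η : Fin N → Fin n → ℝ),
        (∀ i, ip (v + γ i - η i) (ξ i) - ip (γ i) a + ip (η i) b - t ≤ s i ∧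
          lpNorm q (v + γ i - η i) ≤ lam ∧
          (∀ j, 0 ≤ γ i j) ∧ (∀ j, 0 ≤ η i j) ∧ 0 ≤ s i) ∧
        y = (1 / (N : ℝ)) * ∑ i, s i + lam * ε} := by
  have hq := one_le_conj hpq
  set P := {r : ℝ | ∃ μ : Measure (Fin n → ℝ), IsProbabilityMeasure μ ∧
        μ {x : Fin n → ℝ | ∀ i, a i ≤ x i ∧ x i ≤ b i}ᶜ = 0 ∧
        dW p (empirical N ξ) μ ≤ ENNReal.ofReal ε ∧ r = ∫ x, hfun v t x ∂μ} with hP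
  set D := {y : ℝ | ∃ (s : Fin N → ℝ) (lam : ℝ) (γ η : Fin N → Fin n → ℝ),
        (∀ i, ip (v + γ i - η i) (ξ i) - ip (γ i) a + ip (η i) b - t ≤ s i ∧
          lpNorm q (v + γ i - η i) ≤ lam ∧
          (∀ j, 0 ≤ γ i j) ∧ (∀ j, 0 ≤ η i j) ∧ 0 ≤ s i) ∧
        y = (1 / (N : ℝ)) * ∑ i, s i + lam * ε} with hD
  have hweak : ∀ r ∈ P, ∀ y ∈ D, r ≤ y := by
    rintro r ⟨μ, hμ, hsupp, hdist, rfl⟩ y ⟨s, lam, γ, η, hfeas, rfl⟩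
    have hlam : 0 ≤ lam := (lpN_nonneg q hq _).trans (hfeas ⟨0, hN⟩).2.1
    refine le_of_forall_pos_le_add fun δ hδ => ?_
    have hδ' : 0 < δ / (lam + 1) := by positivity
    have hlt : dW p (empirical N ξ) μ < ENNReal.ofReal (ε + δ / (lam + 1)) :=
      hdist.trans_lt ((ENNReal.ofReal_lt_ofReal_iff (by positivity)).2 (by linarith))
    simp only [dW, iInf_lt_iff] at hlt
    obtain ⟨K, hK, m1, m2, hcost⟩ := hlt
    have hsK : ∀ᵐ z ∂K, z.2 ∈ bx a b := by
      refine ae_of_ae_map measurable_snd.aemeasurable ?_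
      rw [m2, ae_iff]
      exact hsupp
    have hw := weak_coupling hp a b v t N hN ξ s lam hlam
      (fun i y hy => pointwise_bound hp hpq a b v (ξ i) (γ i) (η i) t (s i) lam (hfeas i).1
        (hfeas i).2.1 (hfeas i).2.2.1 (hfeas i).2.2.2.1 (hfeas i).2.2.2.2 y hy)
      K m1 hsK (ε + δ / (lam + 1)) (by positivity) hcost.le
    have hm : ∫ x, hfun v t x ∂μ = ∫ z, hfun v t z.2 ∂K := by
      rw [← m2, integral_map measurable_snd.aemeasurable (hfun_cont v t).aestronglyMeasurable]
    rw [hm]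
    have : lam * (δ / (lam + 1)) ≤ δ := by
      have e : δ / (lam + 1) * (lam + 1) = δ := div_mul_cancel₀ _ (by positivity)
      nlinarith
    linarith
  have hplan : ∀ c r, (c, r) ∈ planSet p a b v t N ξ → c ≤ ε → r ∈ P := by
    rintro c r ⟨hc, K, hK, m1, hs, hd, hi⟩ hce
    refine ⟨K.map Prod.snd, Measure.isProbabilityMeasure_map measurable_snd.aemeasurable,
      ?_, ?_, ?_⟩
    · change (K.map Prod.snd) (bx a b)ᶜ = 0
      rw [Measure.map_apply measurable_snd (bx_meas a b).compl]
      exact hs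
    · refine le_trans ?_ (hd.trans (ENNReal.ofReal_le_ofReal hce))
      exact iInf_le_of_le K (iInf_le_of_le hK (iInf_le_of_le m1 (iInf_le_of_le rfl le_rfl)))
    · rw [integral_map measurable_snd.aemeasurable (hfun_cont v t).aestronglyMeasurable]
      exact hi.symm
  have h0 : ((0 : ℝ), (1 / (N : ℝ)) * ∑ i, hfun v t (ξ i)) ∈ planSet p a b v t N ξ := by
    have := planSet_mem hp a b v t N hN ξ ξ hξ
    simpa [lpN_zero' p hp] using this
  have hPne : P.Nonempty := ⟨_, hplan _ _ h0 hε⟩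
  have hD0 : (1 / (N : ℝ)) * ∑ i, hfun v t (ξ i) + lpNorm q v * ε ∈ D := by
    refine ⟨fun i => hfun v t (ξ i), lpNorm q v, 0, 0, fun i => ⟨?_, ?_, ?_, ?_, ?_⟩, rfl⟩
    · simp only [Pi.zero_apply, add_zero, sub_zero]
      have : ip (0 : Fin n → ℝ) a = 0 := by simp [ip]
      have h' : ip (0 : Fin n → ℝ) b = 0 := by simp [ip]
      rw [this, h', ip_comm']
      simpa [hfun] using le_max_left (ip (ξ i) v - t) 0
    · simp
    · simp
    · simp
    · exact le_max_right _ _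
  have hDne : D.Nonempty := ⟨_, hD0⟩
  have hPbdd : BddAbove P := ⟨_, fun r hr => hweak r hr _ hD0⟩
  have hDbdd : BddBelow D := ⟨_, fun y hy => hweak _ (hplan _ _ h0 hε) y hy⟩
  refine le_antisymm (csSup_le hPne fun r hr => le_csInf hDne fun y hy => hweak r hr y hy) ?_
  rcases hε.eq_or_lt with hε0 | hεpos
  · refine (csInf_le hDbdd hD0).trans (le_trans ?_ (le_csSup hPbdd (hplan _ _ h0 hε)))
    rw [← hε0]; simp
  obtain ⟨lam, hlam, hbound⟩ := exists_lam _ (planSet_convex p a b v t N ξ) _ h0 ε (sSup P) hεpos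
    fun c r h hc => le_csSup hPbdd (hplan c r h hc)
  have hmax : ∀ i, ∃ y ∈ bx a b, ∀ z ∈ bx a b,
      hfun v t z - lam * lpNorm p (ξ i - z) ≤ hfun v t y - lam * lpNorm p (ξ i - y) := by
    intro i
    have hcont : Continuous fun z => hfun v t z - lam * lpNorm p (ξ i - z) :=
      (hfun_cont v t).sub (continuous_const.mul
        ((lpN_cont p hp).comp (continuous_const.sub continuous_id)))
    obtain ⟨y, hy, hym⟩ := (bx_compact a b).exists_isMaxOn ⟨ξ i, hξ i⟩ hcont.continuousOn
    exact ⟨y, hy, fun z hz => hym hz⟩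
  choose y hy hymax using hmax
  have hmul : ∀ i, ∃ γ η : Fin n → ℝ, ip (v + γ - η) (ξ i) - ip γ a + ip η b - t ≤
      hfun v t (y i) - lam * lpNorm p (ξ i - y i) ∧
      lpNorm q (v + γ - η) ≤ lam ∧ (∀ j, 0 ≤ γ j) ∧ (∀ j, 0 ≤ η j) := by
    intro i
    refine exists_multipliers hn hp hpq a b v (ξ i) hab t _ lam hlam fun z hz => ?_
    refine le_trans ?_ (hymax i z hz)
    have : ip v z - t ≤ hfun v t z := by rw [ip_comm']; exact le_max_left _ _
    linarith
  choose γ η hγη using hmul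
  have hmem : (1 / (N : ℝ)) * ∑ i, (hfun v t (y i) - lam * lpNorm p (ξ i - y i)) + lam * ε ∈ D := by
    refine ⟨_, lam, γ, η, fun i => ⟨(hγη i).1, (hγη i).2.1, (hγη i).2.2.1, (hγη i).2.2.2, ?_⟩, rfl⟩
    have h1 := hymax i (ξ i) (hξ i)
    have h2 : 0 ≤ hfun v t (ξ i) := le_max_right _ _
    rw [sub_self, lpN_zero' p hp] at h1
    linarith
  refine (csInf_le hDbdd hmem).trans ?_
  have := hbound _ _ (planSet_mem hp a b v t N hN ξ y hy)
  rw [Finset.sum_sub_distrib, ← Finset.mul_sum]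
  linarith
end

section
/- (Corollary 2, pointwise worst-case linear cost) Let x ∈ ℝⁿ with x_i ≥ 0 for all i, let ε ≥ 0, and let ĉ¹,…,ĉᴺ ∈ ℝⁿ (N ≥ 1) with empirical distribution F_N = (1/N)·Σ_{k=1}^N δ_{ĉᵏ}. Then the supremum of ∫ ⟨c,x⟩ dμ(c) over all Borel probability measures μ on ℝⁿ with finite first moment satisfying d_W^∞(F_N, μ) ≤ ε, where d_W^∞ is the Wasserstein distance with ground metric ‖·‖_∞, equals (1/N)·Σ_{k=1}^N ⟨ĉᵏ,x⟩ + ε·Σ_{i=1}^n x_i = Σ_{i=1}^n ( (1/N)·Σ_{k=1}^N ĉᵏ_i + ε )·x_i. -/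
open MeasureTheory Filter Topology
open scoped ENNReal BigOperators

lemma aux_lpNorm {n : ℕ} (hn : 1 ≤ n) (y : Fin n → ℝ) : lpNorm ∞ y = ‖y‖ := by
  have : Nonempty (Fin n) := ⟨⟨0, hn⟩⟩
  simp only [_root_.lpNorm, if_true]
  apply le_antisymm
  · exact ciSup_le fun i => norm_le_pi_norm y i
  · refine (pi_norm_le_iff_of_nonempty _).2 fun i => ?_
    exact le_ciSup (f := fun i => |y i|) (Set.finite_range _).bddAbove i

lemma aux_prob {n N : ℕ} (hN : 1 ≤ N) (c : Fin N → Fin n → ℝ) :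
    IsProbabilityMeasure (empirical N c) := by
  constructor
  have : (N : ℝ≥0∞) ≠ 0 := by simp; omega
  simp [empirical, ENNReal.inv_mul_cancel this]

lemma aux_int {n N : ℕ} (hN : 1 ≤ N) (c : Fin N → Fin n → ℝ) (f : (Fin n → ℝ) → ℝ) :
    Integrable f (empirical N c) := by
  have : (N : ℝ≥0∞) ≠ 0 := by simp; omega
  refine Integrable.smul_measure ?_ (by simp; omega)
  refine integrable_finsetSum_measure.2 fun i _ => ?_
  exact integrable_dirac (by simp)

lemma aux_integral {n N : ℕ} (c : Fin N → Fin n → ℝ) (f : (Fin n → ℝ) → ℝ) :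
    ∫ y, f y ∂(empirical N c) = (1 / (N : ℝ)) * ∑ k, f (c k) := by
  rw [empirical, integral_smul_measure, integral_finsetSum_measure]
  · simp
  · exact fun i _ => integrable_dirac (by simp)

lemma aux_ip_le {n : ℕ} (x : Fin n → ℝ) (hx : ∀ i, 0 ≤ x i) (y z : Fin n → ℝ) :
    ip z x - ip y x ≤ ‖y - z‖ * ∑ i, x i := by
  rw [ip, ip, ← Finset.sum_sub_distrib, Finset.mul_sum]
  refine Finset.sum_le_sum fun i _ => ?_
  rw [← sub_mul]
  refine mul_le_mul_of_nonneg_right ?_ (hx i)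
  have := norm_le_pi_norm (y - z) i
  rw [Real.norm_eq_abs, Pi.sub_apply] at this
  linarith [neg_abs_le (y i - z i)]

lemma aux_cont {n : ℕ} (x : Fin n → ℝ) : Continuous (fun y => ip y x) := by
  unfold ip; fun_prop

lemma aux_ip_int {n : ℕ} (x : Fin n → ℝ) (μ : Measure (Fin n → ℝ))
    (h : Integrable (fun y => ‖y‖) μ) : Integrable (fun y => ip y x) μ := by
  refine (h.mul_const (∑ i, |x i|)).mono' (aux_cont x).aestronglyMeasurable
    (Eventually.of_forall fun y => ?_)
  rw [ip, Finset.mul_sum]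
  refine (norm_sum_le _ _).trans (Finset.sum_le_sum fun i _ => ?_)
  rw [norm_mul]
  exact mul_le_mul_of_nonneg_right (norm_le_pi_norm y i) (abs_nonneg _)

lemma aux_upper {n N : ℕ} (hn : 1 ≤ n) (hN : 1 ≤ N)
    (x : Fin n → ℝ) (hx : ∀ i, 0 ≤ x i) (ε : ℝ) (hε : 0 ≤ ε) (c : Fin N → Fin n → ℝ)
    (μ : Measure (Fin n → ℝ)) (hμ : Integrable (fun y => ‖y‖) μ)
    (hd : dW ∞ (empirical N c) μ < ENNReal.ofReal ε) :
    ∫ y, ip y x ∂μ ≤ (1 / (N : ℝ)) * ∑ k, ip (c k) x + ε * ∑ i, x i := by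
  simp only [dW, iInf_lt_iff, aux_lpNorm hn] at hd
  obtain ⟨K, hK, h1, h2, hlt⟩ := hd
  rw [← aux_integral c (fun y => ip y x)]
  have i1 := aux_int hN c (fun y => ip y x)
  have i2 := aux_ip_int x μ hμ
  rw [← h1] at i1 ⊢
  rw [← h2] at i2 ⊢
  have m := aux_cont x
  have j1 := i1.comp_measurable measurable_fst
  have j2 := i2.comp_measurable measurable_snd
  rw [integral_map measurable_fst.aemeasurable m.aestronglyMeasurable,
    integral_map measurable_snd.aemeasurable m.aestronglyMeasurable]
  have hs : 0 ≤ ∑ i, x i := Finset.sum_nonneg fun i _ => hx i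
  have mm : AEStronglyMeasurable (fun z : (Fin n → ℝ) × (Fin n → ℝ) => ‖z.1 - z.2‖) K := by
    exact Continuous.aestronglyMeasurable (by fun_prop)
  have j3 : Integrable (fun z : (Fin n → ℝ) × (Fin n → ℝ) => ‖z.1 - z.2‖) K :=
    ⟨mm, (hasFiniteIntegral_iff_ofReal (Eventually.of_forall fun _ => norm_nonneg _)).2
      (hlt.trans ENNReal.ofReal_lt_top)⟩
  have k1 : ∫ z, ‖z.1 - z.2‖ ∂K ≤ ε := by
    rw [integral_eq_lintegral_of_nonneg_ae (Eventually.of_forall fun _ => norm_nonneg _) mm]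
    exact ENNReal.toReal_le_of_le_ofReal hε hlt.le
  have k2 := integral_mono (j2.sub j1) (j3.mul_const (∑ i, x i))
    (fun z => aux_ip_le x hx z.1 z.2)
  rw [integral_mul_const] at k2
  have k3 := integral_sub j2 j1
  simp only [Function.comp_def, Pi.sub_apply] at k2 k3
  have k4 := mul_le_mul_of_nonneg_right k1 hs
  linarith [k2, k3, k4]

/-- Corollary 2, pointwise worst-case linear cost: for `x ≥ 0` and the
Wasserstein ball (ground metric `‖·‖_∞`) of radius `ε` around the empirical distribution of
the cost samples, `sup ∫ ⟨c,x⟩ dμ(c) = (1/N)Σₖ ⟨ĉᵏ,x⟩ + ε Σᵢ xᵢ = Σᵢ ((1/N)Σₖ ĉᵏᵢ + ε)xᵢ`. -/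
theorem stmt15 (n : ℕ) (hn : 1 ≤ n)
    (x : Fin n → ℝ) (hx : ∀ i, 0 ≤ x i) (ε : ℝ) (hε : 0 ≤ ε)
    (N : ℕ) (hN : 1 ≤ N) (c : Fin N → Fin n → ℝ) :
    sSup {r : ℝ | ∃ μ : Measure (Fin n → ℝ), IsProbabilityMeasure μ ∧
        Integrable (fun y => lpNorm ∞ y) μ ∧
        dW ∞ (empirical N c) μ ≤ ENNReal.ofReal ε ∧ r = ∫ y, ip y x ∂μ} =
      (1 / (N : ℝ)) * ∑ k, ip (c k) x + ε * ∑ i, x i ∧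
    (1 / (N : ℝ)) * ∑ k, ip (c k) x + ε * ∑ i, x i =
      ∑ i, ((1 / (N : ℝ)) * ∑ k, c k i + ε) * x i := by
  have hsecond : (1 / (N : ℝ)) * ∑ k, ip (c k) x + ε * ∑ i, x i =
      ∑ i, ((1 / (N : ℝ)) * ∑ k, c k i + ε) * x i := by
    simp only [ip, add_mul, Finset.sum_add_distrib, Finset.mul_sum, Finset.sum_mul]
    rw [Finset.sum_comm]
    simp only [mul_assoc]
  refine ⟨IsGreatest.csSup_eq ⟨?_, ?_⟩, hsecond⟩
  · have hP := aux_prob hN c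
    have hm : Measurable (fun y : Fin n → ℝ => y + fun _ => ε) := by fun_prop
    have hc : Continuous (fun y : Fin n → ℝ => ‖y‖) := by fun_prop
    refine ⟨(empirical N c).map (fun y => y + fun _ => ε),
      Measure.isProbabilityMeasure_map hm.aemeasurable, ?_, ?_, ?_⟩
    · simp only [aux_lpNorm hn]
      rw [integrable_map_measure hc.aestronglyMeasurable hm.aemeasurable]
      exact aux_int hN c _
    · have hp : Measurable (fun y : Fin n → ℝ => (y, y + fun _ => ε)) := by fun_prop
      have hf : ((empirical N c).map (fun y => (y, y + fun _ => ε))).map Prod.fst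
          = empirical N c := by
        rw [Measure.map_map measurable_fst hp]
        exact Measure.map_id
      have hg : ((empirical N c).map (fun y => (y, y + fun _ => ε))).map Prod.snd
          = (empirical N c).map (fun y => y + fun _ => ε) := by
        rw [Measure.map_map measurable_snd hp]
        rfl
      have hq := Measure.isProbabilityMeasure_map (μ := empirical N c) hp.aemeasurable
      unfold dW
      refine (iInf_le _ ((empirical N c).map (fun y => (y, y + fun _ => ε)))).trans
        ((iInf_le _ hq).trans ((iInf_le _ hf).trans ((iInf_le _ hg).trans ?_)))
      · simp only [aux_lpNorm hn]
        rw [lintegral_map (by fun_prop) hp]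
        have : Nonempty (Fin n) := ⟨⟨0, hn⟩⟩
        simp [abs_of_nonneg hε]
    · rw [integral_map hm.aemeasurable (aux_cont x).aestronglyMeasurable,
        aux_integral c (fun y => ip (y + fun _ => ε) x)]
      have h : (N : ℝ) ≠ 0 := by positivity
      simp only [ip, Pi.add_apply, add_mul, Finset.sum_add_distrib, ← Finset.mul_sum]
      simp
      field_simp
  · rintro r ⟨μ, hμ, hi, hd, rfl⟩
    simp only [aux_lpNorm hn] at hi
    have hs : 0 ≤ ∑ i, x i := Finset.sum_nonneg fun i _ => hx i
    have key : ∀ ε' > ε, ∫ y, ip y x ∂μ ≤ (1 / (N : ℝ)) * ∑ k, ip (c k) x + ε' * ∑ i, x i := by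
      intro ε' h
      exact aux_upper hn hN x hx ε' (hε.trans h.le) c μ hi
        (hd.trans_lt ((ENNReal.ofReal_lt_ofReal_iff (hε.trans_lt h)).2 h))
    have ht : Tendsto (fun e : ℝ => (1 / (N : ℝ)) * ∑ k, ip (c k) x + e * ∑ i, x i) (𝓝[>] ε)
        (𝓝 ((1 / (N : ℝ)) * ∑ k, ip (c k) x + ε * ∑ i, x i)) :=
      (Continuous.tendsto (by fun_prop) ε).mono_left nhdsWithin_le_nhds
    exact ge_of_tendsto ht (eventually_mem_nhdsWithin.mono key)
end
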